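/- Every CO-charming space with a point-countable base is metrizable: if X is a CO-charming topological space possessing a base ℬ for its topology such that every point of X belongs to at most countably many members of ℬ, then X is metrizable. -/

import Mathlib

open Set Function TopologicalSpace

universe u

/-- A map between topological spaces is *perfect* if it is continuous, closed, and
every fiber is compact. -/
def PerfectMap {Y : Type*} {Z : Type*} [TopologicalSpace Y] [TopologicalSpace Z]
    (f : Y → Z) : Prop :=
  Continuous f ∧ IsClosedMap f ∧ ∀ z : Z, IsCompact (f ⁻¹' {z})

/-- A topological space `X` is a *Lindelöf Σ-space* if there exist a topological space `Y`,
a continuous surjection from `Y` onto `X`, and a perfect surjection from `Y` onto some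
second-countable space. -/
def IsLindelofSigma (X : Type u) [TopologicalSpace X] : Prop :=
  ∃ (Y : Type u) (tY : TopologicalSpace Y) (Z : Type u) (tZ : TopologicalSpace Z),
    @SecondCountableTopology Z tZ ∧
    (∃ f : Y → X, @Continuous Y X tY _ f ∧ Surjective f) ∧
    (∃ g : Y → Z, @PerfectMap Y Z tY tZ g ∧ Surjective g)

/-- A topological space `X` is a *charming space* if there is a subset `Y` of `X` that is a
Lindelöf Σ-space in the subspace topology and such that for every open `U ⊇ Y`,
the set `X \ U` is a Lindelöf Σ-space in the subspace topology. -/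
def IsCharming (X : Type u) [TopologicalSpace X] : Prop :=
  ∃ Y : Set X, IsLindelofSigma Y ∧
    ∀ U : Set X, IsOpen U → Y ⊆ U → IsLindelofSigma ↥(Uᶜ)

/-- A *CL-charming* space: the shell `Y` can be chosen closed. -/
def IsCLCharming (X : Type u) [TopologicalSpace X] : Prop :=
  ∃ Y : Set X, IsClosed Y ∧ IsLindelofSigma Y ∧
    ∀ U : Set X, IsOpen U → Y ⊆ U → IsLindelofSigma ↥(Uᶜ)

/-- A *CO-charming* space: the shell `Y` can be chosen compact. -/
def IsCOCharming (X : Type u) [TopologicalSpace X] : Prop :=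
  ∃ Y : Set X, IsCompact Y ∧ IsLindelofSigma Y ∧
    ∀ U : Set X, IsOpen U → Y ⊆ U → IsLindelofSigma ↥(Uᶜ)

/-- A space has a *countable network* if there is a countable family `N` of subsets such that
every point in every open set `V` is contained in a member of `N` contained in `V`. -/
def HasCountableNetwork (X : Type u) [TopologicalSpace X] : Prop :=
  ∃ N : Set (Set X), N.Countable ∧
    ∀ x : X, ∀ V : Set X, IsOpen V → x ∈ V → ∃ n ∈ N, x ∈ n ∧ n ⊆ V

/-- A topological space `X` is *weak (4,4)-structured* if there exist a topological space `Y`,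
a continuous surjection from `Y` onto `X`, and a perfect surjection from `Y` onto some
charming space. -/
def IsWeak44Structured (X : Type u) [TopologicalSpace X] : Prop :=
  ∃ (Y : Type u) (tY : TopologicalSpace Y) (M : Type u) (tM : TopologicalSpace M),
    @IsCharming M tM ∧
    (∃ f : Y → X, @Continuous Y X tY _ f ∧ Surjective f) ∧
    (∃ g : Y → M, @PerfectMap Y M tY tM g ∧ Surjective g)

/-! Only countably many members of a point-countable base meet a given separable set, so a
separable space with such a base is second countable. By Urysohn's theorem it therefore
suffices to show that `X` is separable.

For a Lindelöf Σ-space, fix a countable network `N` modulo compact sets and, by closing off, a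
countable set `D` meeting every nonempty `n \ ⋃₀ F`, where `n ∈ N` and `F` is a finite set of basic
sets meeting `D`. If `x ∉ closure D` and `C ∋ x` is a compact set around which `N` is a network,
finitely many basic sets meeting `D` cover `C ∩ closure D` but miss `x`. Some `n ∈ N` containing `x`
then lies in the union of these sets and of the complement of `closure D`, so `D` avoids the
nonempty set `n \ ⋃₀ F`.

In a CO-charming space the compact shell is thus separable, and only countably many finite sets of
basic sets meeting the shell cover it. The unions of these covers have Lindelöf Σ, hence separable,
complements, and every point off the shell lies in one of them.
-/

/-- A family of sets is *point-countable* if every point lies in at most countably many of its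
members. -/
def IsPointCountable {X : Type*} (B : Set (Set X)) : Prop :=
  ∀ x : X, {b ∈ B | x ∈ b}.Countable

/-- A family `N` of sets is a *network modulo compact sets* if the space is covered by compact sets
`C` such that every open neighborhood of `C` contains a member of `N` which contains `C`. A
Lindelöf Σ-space has a countable such family. The compact cover is left implicit. -/
def IsNetworkModCompact {X : Type*} [TopologicalSpace X] (N : Set (Set X)) : Prop :=
  ∀ x : X, ∃ C : Set X, IsCompact C ∧ x ∈ C ∧
    ∀ U : Set X, IsOpen U → C ⊆ U → ∃ n ∈ N, C ⊆ n ∧ n ⊆ U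

theorem exists_countable_forall_finite_subset_inter_nonempty {α : Type*}
    (𝒜 : Set α → Set (Set α)) (h𝒜 : ∀ t : Set α, t.Finite → (𝒜 t).Countable) :
    ∃ D : Set α, D.Countable ∧
      ∀ t ⊆ D, t.Finite → ∀ a ∈ 𝒜 t, a.Nonempty → (a ∩ D).Nonempty := by
  have exists_witnesses : ∀ t : Set α, t.Finite →
      ∃ W : Set α, W.Countable ∧ ∀ a ∈ 𝒜 t, a.Nonempty → (a ∩ W).Nonempty := by
    intro t ht
    have : Countable {a ∈ 𝒜 t | a.Nonempty} := ((h𝒜 t ht).mono (sep_subset _ _)).to_subtype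
    exact ⟨range fun a : {a ∈ 𝒜 t | a.Nonempty} ↦ a.2.2.some, countable_range _,
      fun a ha hne ↦ ⟨hne.some, hne.some_mem, ⟨a, ha, hne⟩, rfl⟩⟩
  choose! W hWcountable hW using exists_witnesses
  let enlarge : Set α → Set α := fun D ↦ D ∪ ⋃ t ∈ {t : Set α | t.Finite ∧ t ⊆ D}, W t
  let E : ℕ → Set α := fun n ↦ enlarge^[n] ∅
  have hEsucc (n : ℕ) : E (n + 1) = enlarge (E n) := iterate_succ_apply' enlarge n ∅
  have hEcountable (n : ℕ) : (E n).Countable := by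
    induction n with
    | zero => exact countable_empty
    | succ n ih =>
      rw [hEsucc]
      exact ih.union ((countable_ofPred_finite_subset ih).biUnion fun t ht ↦ hWcountable t ht.1)
  have hEmono : Monotone E := fun _ _ hmn ↦
    monotone_iterate_of_id_le (fun _ ↦ subset_union_left) hmn ∅
  refine ⟨⋃ n, E n, countable_iUnion hEcountable, fun t htD ht a ha hne ↦ ?_⟩
  obtain ⟨n, htn⟩ : ∃ n, t ⊆ E n := by
    lift t to Finset α using ht
    exact hEmono.directed_le.exists_mem_subset_of_finset_subset_biUnion htD
  obtain ⟨p, hpa, hpW⟩ := hW t ht a ha hne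
  refine ⟨p, hpa, mem_iUnion.2 ⟨n + 1, ?_⟩⟩
  rw [hEsucc]
  exact Or.inr (mem_biUnion (show t ∈ {t : Set α | t.Finite ∧ t ⊆ E n} from ⟨ht, htn⟩) hpW)

section PointCountable

variable {X : Type*} {B : Set (Set X)}

theorem IsPointCountable.preimage_val (hpc : IsPointCountable B) (S : Set X) :
    IsPointCountable (preimage (Subtype.val : S → X) '' B) := by
  intro x
  refine ((hpc x).image (preimage Subtype.val)).mono ?_
  rintro _ ⟨⟨b, hb, rfl⟩, hxb⟩
  exact ⟨b, ⟨hb, hxb⟩, rfl⟩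

variable [TopologicalSpace X]

theorem IsPointCountable.countable_inter_nonempty (hpc : IsPointCountable B)
    (hopen : ∀ b ∈ B, IsOpen b) {S : Set X} (hS : IsSeparable S) :
    {b ∈ B | (b ∩ S).Nonempty}.Countable := by
  obtain ⟨D, hD, hSD⟩ := hS
  refine (hD.biUnion fun x _ ↦ hpc x).mono ?_
  rintro b ⟨hb, x, hxb, hxS⟩
  obtain ⟨d, hdb, hdD⟩ := mem_closure_iff.1 (hSD hxS) b (hopen b hb) hxb
  exact mem_biUnion hdD ⟨hb, hdb⟩

theorem IsPointCountable.secondCountableTopology [SeparableSpace X] (hpc : IsPointCountable B)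
    (hB : IsTopologicalBasis B) : SecondCountableTopology X := by
  have hcountable : {b ∈ B | (b ∩ univ).Nonempty}.Countable :=
    hpc.countable_inter_nonempty (fun _ ↦ hB.isOpen) (.of_separableSpace univ)
  refine hB.secondCountableTopology ((hcountable.insert ∅).mono fun b hb ↦ ?_)
  exact b.eq_empty_or_nonempty.imp id fun hne ↦ ⟨hb, by rwa [inter_univ]⟩

end PointCountable

section Separable

variable {X : Type*} [TopologicalSpace X] [T1Space X] {B : Set (Set X)}

theorem exists_finite_basic_cover_notMem (hB : IsTopologicalBasis B) {K : Set X}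
    (hK : IsCompact K) {x : X} (hx : x ∉ K) :
    ∃ F ⊆ {b ∈ B | (b ∩ K).Nonempty}, F.Finite ∧ K ⊆ ⋃₀ F ∧ x ∉ ⋃₀ F := by
  have hcover : K ⊆ ⋃ b ∈ {b ∈ B | (b ∩ K).Nonempty ∧ x ∉ b}, b := by
    intro q hq
    obtain ⟨b, hb, hqb, hbx⟩ :=
      hB.exists_subset_of_mem_open (ne_of_mem_of_not_mem hq hx) isOpen_compl_singleton
    exact mem_biUnion (show b ∈ {b ∈ B | (b ∩ K).Nonempty ∧ x ∉ b} from
      ⟨hb, ⟨q, hqb, hq⟩, fun hxb ↦ hbx hxb rfl⟩) hqb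
  obtain ⟨F, hF, hFfin, hKF⟩ := hK.elim_finite_subcover_image (fun b hb ↦ hB.isOpen hb.1) hcover
  refine ⟨F, fun b hb ↦ ⟨(hF hb).1, (hF hb).2.1⟩, hFfin, by rwa [sUnion_eq_biUnion], ?_⟩
  rintro ⟨b, hb, hxb⟩
  exact (hF hb).2.2 hxb

theorem IsNetworkModCompact.separableSpace {N : Set (Set X)} (hN : IsNetworkModCompact N)
    (hNcountable : N.Countable) (hB : IsTopologicalBasis B) (hpc : IsPointCountable B) :
    SeparableSpace X := by
  let 𝓕 : Set X → Set (Set (Set X)) := fun t ↦ {F | F.Finite ∧ F ⊆ {b ∈ B | (b ∩ t).Nonempty}}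
  have h𝓕 : ∀ t : Set X, t.Finite →
      (image2 (fun n (F : Set (Set X)) ↦ n \ ⋃₀ F) N (𝓕 t)).Countable :=
    fun t ht ↦ hNcountable.image2 (countable_ofPred_finite_subset
      (hpc.countable_inter_nonempty (fun _ ↦ hB.isOpen) ht.countable.isSeparable)) _
  obtain ⟨D, hDcountable, hD⟩ := exists_countable_forall_finite_subset_inter_nonempty _ h𝓕
  refine ⟨D, hDcountable, fun x ↦ by_contra fun hx ↦ ?_⟩
  obtain ⟨C, hC, hxC, hCN⟩ := hN x
  obtain ⟨F, hF, hFfin, hCF, hxF⟩ :=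
    exists_finite_basic_cover_notMem hB (hC.inter_right isClosed_closure) fun h ↦ hx h.2
  have hF_meets_D : ∀ b ∈ F, ∃ d ∈ D, d ∈ b := by
    intro b hb
    obtain ⟨q, hqb, -, hqD⟩ := (hF hb).2
    obtain ⟨d, hdb, hdD⟩ := mem_closure_iff.1 hqD b (hB.isOpen (hF hb).1) hqb
    exact ⟨d, hdD, hdb⟩
  have : Nonempty X := ⟨x⟩
  choose! d hdD hdb using hF_meets_D
  have hF𝓕 : F ∈ 𝓕 (d '' F) :=
    ⟨hFfin, fun b hb ↦ ⟨(hF hb).1, d b, hdb b hb, mem_image_of_mem d hb⟩⟩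
  have hUopen : IsOpen (⋃₀ F ∪ (closure D)ᶜ) :=
    (isOpen_sUnion fun b hb ↦ hB.isOpen (hF hb).1).union isClosed_closure.isOpen_compl
  have hCU : C ⊆ ⋃₀ F ∪ (closure D)ᶜ := fun q hqC ↦
    (em (q ∈ closure D)).imp (fun hqD ↦ hCF ⟨hqC, hqD⟩) id
  obtain ⟨n, hn, hCn, hnU⟩ := hCN _ hUopen hCU
  obtain ⟨p, ⟨hpn, hpF⟩, hpD⟩ := hD (d '' F) (image_subset_iff.2 hdD) (hFfin.image d)
    _ (mem_image2_of_mem hn hF𝓕) ⟨x, hCn hxC, hxF⟩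
  exact (hnU hpn).elim hpF fun hpD' ↦ hpD' (subset_closure hpD)

theorem separableSpace_of_isCompact_of_isSeparable_compl (hB : IsTopologicalBasis B)
    (hpc : IsPointCountable B) {K : Set X} (hK : IsCompact K) (hKsep : IsSeparable K)
    (hcompl : ∀ U : Set X, IsOpen U → K ⊆ U → IsSeparable Uᶜ) : SeparableSpace X := by
  let 𝓕 : Set (Set (Set X)) := {F | F.Finite ∧ F ⊆ {b ∈ B | (b ∩ K).Nonempty}} ∩ {F | K ⊆ ⋃₀ F}
  have : Countable 𝓕 := ((countable_ofPred_finite_subset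
    (hpc.countable_inter_nonempty (fun _ ↦ hB.isOpen) hKsep)).mono
      inter_subset_left).to_subtype
  have hsep : IsSeparable (K ∪ ⋃ F : 𝓕, (⋃₀ F.1)ᶜ) := hKsep.union <| .iUnion fun F ↦
    hcompl _ (isOpen_sUnion fun b hb ↦ hB.isOpen (F.2.1.2 hb).1) F.2.2
  refine isSeparable_univ_iff.1 (hsep.mono fun x _ ↦ (em (x ∈ K)).imp id fun hx ↦ ?_)
  obtain ⟨F, hF, hFfin, hKF, hxF⟩ := exists_finite_basic_cover_notMem hB hK hx
  exact mem_iUnion.2 ⟨⟨F, ⟨hFfin, hF⟩, hKF⟩, hxF⟩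

end Separable

section Charming

variable {X : Type u} [TopologicalSpace X]

theorem IsLindelofSigma.exists_countable_isNetworkModCompact (hX : IsLindelofSigma X) :
    ∃ N : Set (Set X), N.Countable ∧ IsNetworkModCompact N := by
  obtain ⟨Y, _, Z, _, _, ⟨f, hf, hfsurj⟩, g, ⟨-, hgclosed, hgfiber⟩, -⟩ := hX
  refine ⟨(fun w ↦ f '' (g ⁻¹' w)) '' countableBasis Z,
    (countable_countableBasis Z).image _, fun x ↦ ?_⟩
  obtain ⟨y, rfl⟩ := hfsurj x
  refine ⟨f '' (g ⁻¹' {g y}), (hgfiber (g y)).image hf, mem_image_of_mem f rfl, fun U hU hyU ↦ ?_⟩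
  have hopen : IsOpen (kernImage g (f ⁻¹' U)) :=
    isClosedMap_iff_kernImage.1 hgclosed (hU.preimage hf)
  have hgy : g y ∈ kernImage g (f ⁻¹' U) := fun _ hy' ↦ hyU (mem_image_of_mem f hy')
  obtain ⟨w, hw, hyw, hwU⟩ := (isBasis_countableBasis Z).exists_subset_of_mem_open hgy hopen
  exact ⟨_, mem_image_of_mem _ hw,
    image_mono (preimage_mono (singleton_subset_iff.2 hyw)),
    image_subset_iff.2 fun _ hy' ↦ hwU hy' rfl⟩

variable [T1Space X] {B : Set (Set X)}

theorem IsLindelofSigma.isSeparable {S : Set X} (hS : IsLindelofSigma S)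
    (hB : IsTopologicalBasis B) (hpc : IsPointCountable B) : IsSeparable S := by
  obtain ⟨N, hNcountable, hN⟩ := hS.exists_countable_isNetworkModCompact
  have : SeparableSpace S :=
    hN.separableSpace hNcountable (isTopologicalBasis_subtype hB _) (hpc.preimage_val S)
  exact .of_subtype S

theorem IsCOCharming.secondCountableTopology (hX : IsCOCharming X) (hB : IsTopologicalBasis B)
    (hpc : IsPointCountable B) : SecondCountableTopology X := by
  obtain ⟨K, hK, hKsigma, hcompl⟩ := hX
  have : SeparableSpace X := separableSpace_of_isCompact_of_isSeparable_compl hB hpc hK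
    (hKsigma.isSeparable hB hpc) fun U hU hKU ↦ (hcompl U hU hKU).isSeparable hB hpc
  exact hpc.secondCountableTopology hB

end Charming

theorem COCharming_point_countable_base_metrizable_general {X : Type u} [TopologicalSpace X]
    [T3Space X] (hX : IsCOCharming X) {B : Set (Set X)} (hB : IsTopologicalBasis B)
    (hpc : IsPointCountable B) : MetrizableSpace X :=
  have := hX.secondCountableTopology hB hpc
  metrizableSpace_of_t3_secondCountable X

/-- A CO-charming space with a point-countable base is metrizable. -/
theorem COCharming_point_countable_base_metrizable {X : Type u} [TopologicalSpace X]
    [T35Space X] (hX : IsCOCharming X) (B : Set (Set X))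
    (hBopen : ∀ b ∈ B, IsOpen b)
    (hBbase : ∀ x : X, ∀ U : Set X, IsOpen U → x ∈ U → ∃ b ∈ B, x ∈ b ∧ b ⊆ U)
    (hBpc : ∀ x : X, {b ∈ B | x ∈ b}.Countable) :
    TopologicalSpace.MetrizableSpace X :=
  COCharming_point_countable_base_metrizable_general hX
    (isTopologicalBasis_of_isOpen_of_nhds hBopen fun x U hx hU ↦ hBbase x U hU hx) hBpc
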